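/- Let Ω ⊆ ℝ^m be open, γ ∈ (0,1], and let f : Ω → ℝ^{2n+1} be a map with finite Korányi γ-Hölder constant [f]_γ (i.e. f ∈ C^{0,γ}(Ω; ℍ^n)). Suppose the ball B^m(x_0, 2r) is contained in Ω. Then for every 0 < ε < r and every p ∈ B^m(x_0, r), the mollification f_ε = f * η_ε satisfies |(f_ε^*α)(p)| ≤ 4^γ · ‖∇η‖_{L^1} · ([f]_{γ,2ε,B^m(x_0,2r)})^2 · ε^{2γ−1}, where [f]_{γ,2ε,B^m(x_0,2r)} = sup{ d_K(f(x), f(y))/|x−y|^γ : x, y ∈ B^m(x_0,2r), 0 < |x−y| < 2ε }. -/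

import Mathlib

open Metric Set MeasureTheory Topology

/-- The index of the coordinate `x_j` in `ℝ^{2n+1}`. -/
def xI (n : ℕ) (j : Fin n) : Fin (2*n+1) := ⟨2*j.1, by have := j.2; omega⟩

/-- The index of the coordinate `y_j` in `ℝ^{2n+1}`. -/
def yI (n : ℕ) (j : Fin n) : Fin (2*n+1) := ⟨2*j.1+1, by have := j.2; omega⟩

/-- The index of the coordinate `t` in `ℝ^{2n+1}`. -/
def tI (n : ℕ) : Fin (2*n+1) := Fin.last (2*n)

/-- The Korányi metric on the Heisenberg group `ℍ^n = ℝ^{2n+1}`: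
`d_K(p,q) = (|z-z'|^4 + |t - t' + 2 ∑_j (x_j' y_j - x_j y_j')|^2)^{1/4}`. -/
noncomputable def dK (n : ℕ) (p q : EuclideanSpace ℝ (Fin (2*n+1))) : ℝ :=
  ((∑ i : Fin (2*n), (p (Fin.castSucc i) - q (Fin.castSucc i)) ^ 2) ^ 2 +
    (p (tI n) - q (tI n) +
      2 * ∑ j : Fin n, (q (xI n j) * p (yI n j) - p (xI n j) * q (yI n j))) ^ 2) ^ ((1:ℝ)/4)

/-- The Euclidean distance between the projections of `p, q ∈ ℝ^{2n+1}` onto the first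
`2n` coordinates. -/
noncomputable def edistProj (n : ℕ) (p q : EuclideanSpace ℝ (Fin (2*n+1))) : ℝ :=
  Real.sqrt (∑ i : Fin (2*n), (p (Fin.castSucc i) - q (Fin.castSucc i)) ^ 2)

/-- The `ε`-mollification `f_ε = f * η_ε` of `f`, where `η_ε(z) = ε^{-m} η(z/ε)`. -/
noncomputable def mollify (m d : ℕ) (η : EuclideanSpace ℝ (Fin m) → ℝ) (ε : ℝ)
    (f : EuclideanSpace ℝ (Fin m) → EuclideanSpace ℝ (Fin d))
    (p : EuclideanSpace ℝ (Fin m)) : EuclideanSpace ℝ (Fin d) :=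
  ∫ z, ((ε ^ m)⁻¹ * η (ε⁻¹ • z)) • f (p - z)

/-- The pullback `g^*α` of the standard contact form
`α = dt + 2 ∑_j (x_j dy_j - y_j dx_j)`, identified with the `ℝ^m`-valued map
`g^*α(p) = ∇g^t(p) + 2 ∑_j (g^{x_j}(p)·∇g^{y_j}(p) - g^{y_j}(p)·∇g^{x_j}(p))`. -/
noncomputable def pullA (n m : ℕ)
    (g : EuclideanSpace ℝ (Fin m) → EuclideanSpace ℝ (Fin (2*n+1)))
    (p : EuclideanSpace ℝ (Fin m)) : EuclideanSpace ℝ (Fin m) :=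
  gradient (fun q => g q (tI n)) p +
    (2:ℝ) • ∑ j : Fin n,
      (g p (xI n j) • gradient (fun q => g q (yI n j)) p -
        g p (yI n j) • gradient (fun q => g q (xI n j)) p)

/-- The vertical component of `q⁻¹ * p` in the Heisenberg group. -/
noncomputable def vertDiff (n : ℕ) (p q : EuclideanSpace ℝ (Fin (2*n+1))) : ℝ :=
  p (tI n) - q (tI n) +
    2 * ∑ j : Fin n, (q (xI n j) * p (yI n j) - p (xI n j) * q (yI n j))

lemma dK_nonneg (n : ℕ) (p q : EuclideanSpace ℝ (Fin (2*n+1))) : 0 ≤ dK n p q := by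
  unfold dK; positivity

lemma dK_pow_four (n : ℕ) (p q : EuclideanSpace ℝ (Fin (2*n+1))) :
    dK n p q ^ 4 = (∑ i : Fin (2*n), (p (Fin.castSucc i) - q (Fin.castSucc i)) ^ 2) ^ 2 +
      vertDiff n p q ^ 2 := by
  unfold dK vertDiff
  rw [← Real.rpow_natCast, ← Real.rpow_mul (by positivity)]
  norm_num

lemma vertDiff_self (n : ℕ) (p : EuclideanSpace ℝ (Fin (2*n+1))) : vertDiff n p p = 0 := by
  unfold vertDiff
  simp [mul_comm]

lemma abs_vertDiff_le (n : ℕ) (p q : EuclideanSpace ℝ (Fin (2*n+1))) :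
    |vertDiff n p q| ≤ dK n p q ^ 2 := by
  apply abs_le_of_sq_le_sq _ (by positivity)
  have := dK_pow_four n p q
  nlinarith [sq_nonneg (∑ i : Fin (2*n), (p (Fin.castSucc i) - q (Fin.castSucc i)) ^ 2)]

lemma abs_sub_castSucc_le (n : ℕ) (p q : EuclideanSpace ℝ (Fin (2*n+1))) (i : Fin (2*n)) :
    |p i.castSucc - q i.castSucc| ≤ dK n p q := by
  have h := dK_pow_four n p q
  have hi : (p i.castSucc - q i.castSucc) ^ 2 ≤
      ∑ i : Fin (2*n), (p (Fin.castSucc i) - q (Fin.castSucc i)) ^ 2 :=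
    Finset.single_le_sum (f := fun i : Fin (2*n) => (p i.castSucc - q i.castSucc) ^ 2)
      (fun _ _ => sq_nonneg _) (Finset.mem_univ i)
  rw [← abs_of_nonneg (dK_nonneg n p q)]
  apply sq_le_sq.mp
  apply le_of_sq_le_sq _ (by positivity)
  nlinarith [sq_nonneg (vertDiff n p q), sq_nonneg (p i.castSucc - q i.castSucc),
    pow_le_pow_left₀ (sq_nonneg _) hi 2]

/-- A map that is Hölder for the Korányi metric is continuous for the Euclidean topology. -/
lemma continuousOn_of_dK_le {X : Type*} [PseudoMetricSpace X] {n : ℕ} {s : Set X} {γ C : ℝ}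
    (hγ : 0 < γ) {f : X → EuclideanSpace ℝ (Fin (2*n+1))}
    (hf : ∀ x ∈ s, ∀ y ∈ s, dK n (f x) (f y) ≤ C * dist x y ^ γ) : ContinuousOn f s := by
  intro x hx
  have hlim : Filter.Tendsto (fun y => C * dist y x ^ γ) (𝓝[s] x) (𝓝 0) := by
    have : ContinuousWithinAt (fun y => C * dist y x ^ γ) s x := by
      apply Continuous.continuousWithinAt
      exact continuous_const.mul ((continuous_id.dist continuous_const).rpow_const
        fun _ => Or.inr hγ.le)
    simpa [ContinuousWithinAt, Real.zero_rpow hγ.ne'] using this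
  have hd : Filter.Tendsto (fun y => dK n (f y) (f x)) (𝓝[s] x) (𝓝 0) :=
    squeeze_zero' (Filter.Eventually.of_forall fun _ => dK_nonneg n _ _)
      (eventually_mem_nhdsWithin.mono fun y hy => hf y hy x hx) hlim
  have hz : ∀ i : Fin (2*n), ContinuousWithinAt (fun y => f y i.castSucc) s x := fun i => by
    rw [ContinuousWithinAt, tendsto_iff_dist_tendsto_zero]
    exact squeeze_zero (fun _ => dist_nonneg) (fun y => abs_sub_castSucc_le n (f y) (f x) i) hd
  have hv : ContinuousWithinAt (fun y => vertDiff n (f y) (f x)) s x := by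
    rw [ContinuousWithinAt, vertDiff_self]
    refine squeeze_zero_norm (fun y => abs_vertDiff_le n (f y) (f x)) ?_
    simpa using hd.pow 2
  have hx' : ∀ j, ContinuousWithinAt (fun y => f y (xI n j)) s x := fun j =>
    hz ⟨2*j.1, by have := j.2; omega⟩
  have hy' : ∀ j, ContinuousWithinAt (fun y => f y (yI n j)) s x := fun j =>
    hz ⟨2*j.1+1, by have := j.2; omega⟩
  have ht : ContinuousWithinAt (fun y => f y (tI n)) s x := by
    have : ContinuousWithinAt (fun y => vertDiff n (f y) (f x) + f x (tI n) -
        2 * ∑ j : Fin n, (f x (xI n j) * f y (yI n j) - f y (xI n j) * f x (yI n j))) s x := by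
      refine (hv.add continuousWithinAt_const).sub (continuousWithinAt_const.mul ?_)
      exact tendsto_finsetSum _ fun j _ =>
        (continuousWithinAt_const.mul (hy' j)).sub ((hx' j).mul continuousWithinAt_const)
    refine this.congr (fun y _ => ?_) ?_ <;> simp only [vertDiff] <;> ring
  have hcoord : ∀ i, ContinuousWithinAt (fun y => f y i) s x := Fin.lastCases ht hz
  exact (PiLp.continuous_toLp 2 _).continuousAt.comp_continuousWithinAt
    (continuousWithinAt_pi.2 hcoord)

section Mollification

variable {E : Type*} [NormedAddCommGroup E] [InnerProductSpace ℝ E] [FiniteDimensional ℝ E]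

lemma continuous_gradient {φ : E → ℝ} (hφ : ContDiff ℝ 1 φ) : Continuous (gradient φ) :=
  (InnerProductSpace.toDual ℝ E).symm.continuous.comp (hφ.continuous_fderiv one_ne_zero)

lemma hasCompactSupport_gradient {φ : E → ℝ} (hc : HasCompactSupport φ) :
    HasCompactSupport (gradient φ) :=
  (hc.fderiv ℝ).comp_left (map_zero (InnerProductSpace.toDual ℝ E).symm)

variable [MeasureSpace E] [BorelSpace E]
  [(volume : Measure E).IsAddHaarMeasure]

lemma integrable_sub_smul {F : Type*} [NormedAddCommGroup F] [NormedSpace ℝ F]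
    {g : E → F} (hg : Continuous g) (hc : HasCompactSupport g) {G : E → ℝ}
    (hG : LocallyIntegrable G) (p : E) : Integrable (fun z => G (p - z) • g z) :=
  hc.convolutionExists_left (ContinuousLinearMap.lsmul ℝ ℝ).flip hg hG p

lemma hasGradientAt_integral_mul_sub {φ : E → ℝ} (hφ : ContDiff ℝ 1 φ)
    (hc : HasCompactSupport φ) {G : E → ℝ} (hG : LocallyIntegrable G) (p : E) :
    HasGradientAt (fun q => ∫ z, φ z * G (q - z)) (∫ z, G (p - z) • gradient φ z) p := by
  have h := hc.hasFDerivAt_convolution_left (ContinuousLinearMap.mul ℝ ℝ) hφ hG p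
  rw [hasGradientAt_iff_hasFDerivAt]
  refine h.congr_fderiv (ContinuousLinearMap.ext fun w => Eq.symm ?_)
  have hint := (hc.fderiv ℝ).convolutionExists_left ((ContinuousLinearMap.mul ℝ ℝ).precompL E)
    (hφ.continuous_fderiv one_ne_zero) hG p
  have hint' := integrable_sub_smul (continuous_gradient hφ) (hasCompactSupport_gradient hc) hG p
  rw [convolution_def, ContinuousLinearMap.integral_apply hint, InnerProductSpace.toDual_apply_apply,
    real_inner_comm, ← integral_inner hint']
  refine integral_congr_ae (Filter.Eventually.of_forall fun z => ?_)
  simp [real_inner_smul_right, inner_gradient_right, mul_comm]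

lemma integral_gradient_eq_zero {φ : E → ℝ} (hφ : ContDiff ℝ 1 φ) (hc : HasCompactSupport φ) :
    ∫ z, gradient φ z = 0 := by
  have h := hasGradientAt_integral_mul_sub hφ hc (G := fun _ => 1)
    (locallyIntegrable_const 1) 0
  simpa using h.unique (hasGradientAt_const _ _)

end Mollification

/-- The pullback `(F * φ)^*α (p)` is an average of `vertDiff n (F (p - z)) (F (p - z')) • ∇φ z` with
weight `φ z'`, because `∇φ` has mean zero; hence it is bounded by the oscillation of `F`. -/
lemma norm_pullA_le_of_vertDiff_le {m n : ℕ} {φ : EuclideanSpace ℝ (Fin m) → ℝ} {ε K : ℝ}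
    (hφ : ContDiff ℝ 1 φ) (hsupp : Function.support φ ⊆ closedBall 0 ε) (hε : 0 < ε)
    (hφ0 : ∀ z, 0 ≤ φ z) (hφ1 : ∫ z, φ z = 1)
    {F : EuclideanSpace ℝ (Fin m) → EuclideanSpace ℝ (Fin (2*n+1))}
    (hF : ∀ i, LocallyIntegrable (fun q => F q i)) (p : EuclideanSpace ℝ (Fin m))
    (hK : ∀ z ∈ ball 0 ε, ∀ z' ∈ ball 0 ε, |vertDiff n (F (p - z)) (F (p - z'))| ≤ K) :
    ‖pullA n m (fun q => ∫ z, φ z • F (q - z)) p‖ ≤ K * ∫ z, ‖gradient φ z‖ := by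
  have hts : tsupport φ ⊆ closedBall 0 ε := closure_minimal hsupp isClosed_closedBall
  have hc : HasCompactSupport φ := (isCompact_closedBall 0 ε).of_isClosed_subset
    (isClosed_tsupport φ) hts
  have hgc := continuous_gradient hφ
  have hgs := hasCompactSupport_gradient hc
  have hφb : ∀ z, φ z ≠ 0 → z ∈ ball 0 ε := fun z hz => by
    have := interior_maximal hsupp hφ.continuous.isOpen_support hz
    rwa [interior_closedBall _ hε.ne'] at this
  have hgb : ∀ z, gradient φ z ≠ 0 → z ∈ ball 0 ε := fun z hz => by
    have hsub : Function.support (gradient φ) ⊆ closedBall 0 ε := fun w hw => by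
      refine hts (support_fderiv_subset ℝ fun h => hw ?_)
      simp [gradient, h]
    have := interior_maximal hsub hgc.isOpen_support hz
    rwa [interior_closedBall _ hε.ne'] at this
  have hint : ∀ i q, Integrable (fun z => φ z * F (q - z) i) := fun i q => by
    simpa [mul_comm] using integrable_sub_smul hφ.continuous hc (hF i) q
  have hφi : Integrable φ := hφ.continuous.integrable_of_hasCompactSupport hc
  have hgi : Integrable (gradient φ) := hgc.integrable_of_hasCompactSupport hgs
  have hug : ∀ i, Integrable (fun z => F (p - z) i • gradient φ z) := fun i =>
    integrable_sub_smul hgc hgs (hF i) p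
  have hcoord : ∀ i q, (∫ z, φ z • F (q - z)) i = ∫ z, φ z * F (q - z) i := fun i q => by
    rw [eval_integral_piLp (by simpa using fun i => hint i q)]
    simp
  set M : Fin (2*n+1) → ℝ := fun i => ∫ z, φ z * F (p - z) i
  have hgrad : ∀ i, gradient (fun q => (∫ z, φ z • F (q - z)) i) p =
      ∫ z, F (p - z) i • gradient φ z := fun i => by
    simp_rw [hcoord]
    exact (hasGradientAt_integral_mul_sub hφ hc (hF i) p).gradient
  set A : EuclideanSpace ℝ (Fin m) → ℝ := fun z => F (p - z) (tI n) - M (tI n) +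
    2 * ∑ j, (M (xI n j) * F (p - z) (yI n j) - F (p - z) (xI n j) * M (yI n j)) with hA
  have hAint : ∀ z, A z = ∫ z', φ z' * vertDiff n (F (p - z)) (F (p - z')) := fun z => by
    have hsum : ∀ j ∈ Finset.univ, Integrable (fun z' =>
        φ z' * F (p - z') (xI n j) * F (p - z) (yI n j) -
          F (p - z) (xI n j) * (φ z' * F (p - z') (yI n j))) := fun j _ =>
      ((hint _ p).mul_const _).sub ((hint _ p).const_mul _)
    have heq : ∀ z', φ z' * vertDiff n (F (p - z)) (F (p - z')) =
        (φ z' * F (p - z) (tI n) - φ z' * F (p - z') (tI n)) + 2 * ∑ j : Fin n,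
          (φ z' * F (p - z') (xI n j) * F (p - z) (yI n j) -
            F (p - z) (xI n j) * (φ z' * F (p - z') (yI n j))) := fun z' => by
      simp only [vertDiff, mul_add, mul_sub, mul_left_comm (φ z') 2, Finset.mul_sum]
      congr 1
      refine Finset.sum_congr rfl fun j _ => ?_
      ring
    simp_rw [heq]
    have hfst : Integrable fun z' => φ z' * F (p - z) (tI n) - φ z' * F (p - z') (tI n) :=
      (hφi.mul_const _).sub (hint _ p)
    rw [integral_add hfst ((integrable_finsetSum _ hsum).const_mul 2),
      integral_sub (hφi.mul_const _) (hint _ p), integral_const_mul, integral_finsetSum _ hsum,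
      integral_mul_const, hφ1, one_mul]
    simp only [hA]
    congr 2
    refine Finset.sum_congr rfl fun j _ => ?_
    rw [integral_sub ((hint _ p).mul_const _) ((hint _ p).const_mul _), integral_mul_const,
      integral_const_mul]
  have hAK : ∀ z ∈ ball (0 : EuclideanSpace ℝ (Fin m)) ε, |A z| ≤ K := fun z hz => by
    rw [hAint, ← Real.norm_eq_abs]
    refine (norm_integral_le_of_norm_le (hφi.mul_const K)
      (Filter.Eventually.of_forall fun z' => ?_)).trans_eq (by rw [integral_mul_const, hφ1, one_mul])
    rw [norm_mul, Real.norm_of_nonneg (hφ0 z')]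
    by_cases h : φ z' = 0
    · simp [h]
    · exact mul_le_mul_of_nonneg_left (hK z hz z' (hφb z' h)) (hφ0 z')
  have hpull : pullA n m (fun q => ∫ z, φ z • F (q - z)) p = ∫ z, A z • gradient φ z := by
    have hsum : ∀ j ∈ Finset.univ, Integrable (fun z =>
        M (xI n j) • F (p - z) (yI n j) • gradient φ z -
          M (yI n j) • F (p - z) (xI n j) • gradient φ z) := fun j _ =>
      ((hug _).smul (M _)).sub ((hug _).smul (M _))
    have heq : ∀ z, A z • gradient φ z =
        (F (p - z) (tI n) • gradient φ z - M (tI n) • gradient φ z) + (2:ℝ) • ∑ j : Fin n,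
          (M (xI n j) • F (p - z) (yI n j) • gradient φ z -
            M (yI n j) • F (p - z) (xI n j) • gradient φ z) := fun z => by
      simp only [hA, add_smul, sub_smul, mul_smul, Finset.sum_smul]
      congr 2
      refine Finset.sum_congr rfl fun j _ => ?_
      rw [smul_comm (M (yI n j))]
    simp_rw [heq]
    have hfst : Integrable fun z => F (p - z) (tI n) • gradient φ z - M (tI n) • gradient φ z :=
      (hug _).sub (hgi.fun_smul _)
    have hsnd : Integrable fun z => (2:ℝ) • ∑ j : Fin n,
        (M (xI n j) • F (p - z) (yI n j) • gradient φ z -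
          M (yI n j) • F (p - z) (xI n j) • gradient φ z) :=
      (integrable_finsetSum _ hsum).smul (2:ℝ)
    rw [integral_add hfst hsnd,
      integral_sub (hug _) (hgi.fun_smul _), integral_smul, integral_gradient_eq_zero hφ hc,
      smul_zero, sub_zero, integral_smul, integral_finsetSum _ hsum, pullA, hgrad]
    congr 2
    refine Finset.sum_congr rfl fun j _ => ?_
    rw [integral_sub ((hug _).fun_smul _) ((hug _).fun_smul _), integral_smul, integral_smul, hgrad, hgrad,
      hcoord, hcoord]
  rw [hpull, ← integral_const_mul]
  refine norm_integral_le_of_norm_le (hgi.norm.const_mul K)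
    (Filter.Eventually.of_forall fun z => ?_)
  rw [norm_smul]
  by_cases h : gradient φ z = 0
  · simp [h]
  · exact mul_le_mul_of_nonneg_right (hAK z (hgb z h)) (norm_nonneg _)

lemma pullA_congr {m n : ℕ} {g h : EuclideanSpace ℝ (Fin m) → EuclideanSpace ℝ (Fin (2*n+1))}
    {p : EuclideanSpace ℝ (Fin m)} (hgh : g =ᶠ[𝓝 p] h) : pullA n m g p = pullA n m h p := by
  have hgrad : ∀ i, gradient (fun q => g q i) p = gradient (fun q => h q i) p := fun i => by
    have : (fun q => g q i) =ᶠ[𝓝 p] fun q => h q i := hgh.fun_comp (fun v => v i)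
    simp only [gradient, this.fderiv_eq]
  simp only [pullA, hgrad, hgh.eq_of_nhds]

lemma gradient_const_mul_comp_smul {E : Type*} [NormedAddCommGroup E] [InnerProductSpace ℝ E]
    [CompleteSpace E] (η : E → ℝ) (a b : ℝ) (z : E) :
    gradient (fun z => a * η (b • z)) z = (a * b) • gradient η (b • z) := by
  have h : fderiv ℝ (fun z => a * η (b • z)) z = (a * b) • fderiv ℝ η (b • z) := by
    rw [show (fun z => a * η (b • z)) = a • (fun z => η (b • z)) from rfl,
      fderiv_const_smul_field, Pi.smul_apply, fderiv_comp_smul, mul_smul]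
  simp [gradient, h]

/-- The vertical increments of a Hölder map are controlled by its Hölder constant at scale `2ε`. -/
lemma abs_vertDiff_le_sSup {X : Type*} [MetricSpace X] {n : ℕ} {γ C ε : ℝ} (hγ : 0 < γ)
    {f : X → EuclideanSpace ℝ (Fin (2*n+1))} {s : Set X}
    (hf : ∀ x ∈ s, ∀ y ∈ s, dK n (f x) (f y) ≤ C * dist x y ^ γ)
    {x y : X} (hx : x ∈ s) (hy : y ∈ s) (hxy : dist x y < 2 * ε) :
    |vertDiff n (f x) (f y)| ≤ (sSup {c : ℝ | ∃ x ∈ s, ∃ y ∈ s,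
      0 < dist x y ∧ dist x y < 2*ε ∧ c = dK n (f x) (f y) / dist x y ^ γ}) ^ 2 *
        ((2 * ε) ^ γ) ^ 2 := by
  rcases eq_or_ne x y with rfl | hne
  · rw [vertDiff_self, abs_zero]
    positivity
  have hd : 0 < dist x y := dist_pos.2 hne
  have hdγ : 0 < dist x y ^ γ := Real.rpow_pos_of_pos hd γ
  rw [← mul_pow]
  refine (abs_vertDiff_le n _ _).trans (pow_le_pow_left₀ (dK_nonneg n _ _) ?_ 2)
  have hle : dK n (f x) (f y) / dist x y ^ γ ≤ sSup {c : ℝ | ∃ x ∈ s, ∃ y ∈ s,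
      0 < dist x y ∧ dist x y < 2*ε ∧ c = dK n (f x) (f y) / dist x y ^ γ} := by
    refine le_csSup ⟨C, ?_⟩ ⟨x, hx, y, hy, hd, hxy, rfl⟩
    rintro c ⟨x, hx, y, hy, hd, -, rfl⟩
    exact (div_le_iff₀ (Real.rpow_pos_of_pos hd γ)).2 (hf x hx y hy)
  calc dK n (f x) (f y) ≤ _ * dist x y ^ γ := (div_le_iff₀ hdγ).1 hle
    _ ≤ _ := mul_le_mul_of_nonneg_left (Real.rpow_le_rpow hd.le hxy.le hγ.le)
      ((div_nonneg (dK_nonneg n _ _) hdγ.le).trans hle)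

/-- Theorem 8.2 of the paper. If `f ∈ C^{0,γ}(Ω;ℍ^n)` and
`B^m(x₀,2r) ⊆ Ω`, then for `0 < ε < r` and `p ∈ B^m(x₀,r)`,
`|(f_ε^*α)(p)| ≤ 4^γ ‖∇η‖₁ [f]_{γ,2ε,B(x₀,2r)}² ε^{2γ-1}`. -/
theorem stmt6 (m n : ℕ) (Ω : Set (EuclideanSpace ℝ (Fin m))) (hΩ : IsOpen Ω)
    (γ : ℝ) (hγ0 : 0 < γ) (hγ1 : γ ≤ 1)
    (f : EuclideanSpace ℝ (Fin m) → EuclideanSpace ℝ (Fin (2*n+1))) (Cf : ℝ)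
    (hf : ∀ x ∈ Ω, ∀ y ∈ Ω, dK n (f x) (f y) ≤ Cf * dist x y ^ γ)
    (x₀ : EuclideanSpace ℝ (Fin m)) (r : ℝ) (hr : 0 < r)
    (hball : ball x₀ (2*r) ⊆ Ω)
    (η : EuclideanSpace ℝ (Fin m) → ℝ)
    (hη₁ : ContDiff ℝ (⊤ : ℕ∞) η) (hη₂ : Function.support η ⊆ closedBall 0 1)
    (hη₃ : ∀ z, 0 ≤ η z) (hη₄ : ∫ z, η z = 1)
    (ε : ℝ) (hε0 : 0 < ε) (hεr : ε < r)
    (p : EuclideanSpace ℝ (Fin m)) (hp : p ∈ ball x₀ r) :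
    ‖pullA n m (mollify m (2*n+1) η ε f) p‖ ≤
      (4:ℝ) ^ γ * (∫ z, ‖gradient η z‖) *
        (sSup {c : ℝ | ∃ x ∈ ball x₀ (2*r), ∃ y ∈ ball x₀ (2*r),
            0 < dist x y ∧ dist x y < 2*ε ∧ c = dK n (f x) (f y) / dist x y ^ γ}) ^ 2 *
        ε ^ (2*γ - 1) := by
  have hsub : closedBall p r ⊆ ball x₀ (2*r) := fun q hq => by
    have := dist_triangle q p x₀
    rw [mem_ball] at hp ⊢
    rw [mem_closedBall] at hq
    linarith
  have hcont : ContinuousOn f (closedBall p r) :=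
    (continuousOn_of_dK_le hγ0 hf).mono (hsub.trans hball)
  set F := (closedBall p r).indicator f with hF
  set φ : EuclideanSpace ℝ (Fin m) → ℝ := fun z => (ε ^ m)⁻¹ * η (ε⁻¹ • z) with hφ
  have hFloc : ∀ i, LocallyIntegrable (fun q => F q i) := fun i => by
    have : (fun q => F q i) = (closedBall p r).indicator (fun q => f q i) := by
      ext q
      by_cases hq : q ∈ closedBall p r <;> simp [hF, hq]
    rw [this]
    refine ((integrable_indicator_iff isClosed_closedBall.measurableSet).2
      (ContinuousOn.integrableOn_compact (isCompact_closedBall p r) ?_)).locallyIntegrable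
    fun_prop
  have hφc : ContDiff ℝ 1 φ := by
    have := hη₁.of_le (m := 1) (by exact_mod_cast le_top)
    fun_prop
  have hφs : Function.support φ ⊆ closedBall 0 ε := fun z hz => by
    have h : ε⁻¹ • z ∈ closedBall 0 1 := hη₂ fun h => hz (by simp [hφ, h])
    rw [mem_closedBall_zero_iff, norm_smul, norm_inv, Real.norm_of_nonneg hε0.le,
      inv_mul_le_iff₀ hε0, mul_one] at h
    simpa using h
  have hφ0 : ∀ z, 0 ≤ φ z := fun z => mul_nonneg (by positivity) (hη₃ _)
  have hscale : ∀ g : EuclideanSpace ℝ (Fin m) → ℝ,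
      ∫ z, (ε ^ m)⁻¹ * g (ε⁻¹ • z) = ∫ z, g z := fun g => by
    rw [integral_const_mul, Measure.integral_comp_inv_smul_of_nonneg _ _ hε0.le,
      finrank_euclideanSpace_fin, smul_eq_mul, inv_mul_cancel_left₀ (by positivity)]
  have hgrad : ∫ z, ‖gradient φ z‖ = ε⁻¹ * ∫ z, ‖gradient η z‖ := by
    rw [← hscale fun z => ‖gradient η z‖, ← integral_const_mul]
    congr 1 with z
    rw [hφ, gradient_const_mul_comp_smul, norm_smul, Real.norm_of_nonneg (by positivity)]
    ring
  have hmoll : mollify m (2*n+1) η ε f =ᶠ[𝓝 p] fun q => ∫ z, φ z • F (q - z) := by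
    filter_upwards [ball_mem_nhds p (sub_pos.2 hεr)] with q hq
    refine integral_congr_ae (Filter.Eventually.of_forall fun z => ?_)
    by_cases hz : φ z = 0
    · simp only [hz, zero_smul]
      exact (congrArg (· • f (q - z)) hz).trans (zero_smul _ _)
    · have hz' := hφs hz
      have hmem : q - z ∈ closedBall p r := by
        rw [mem_closedBall_zero_iff] at hz'
        rw [mem_ball, dist_eq_norm] at hq
        rw [mem_closedBall, dist_eq_norm, sub_right_comm]
        linarith [norm_sub_le (q - p) z]
      simp only [hF, indicator_of_mem hmem, hφ]
  rw [pullA_congr hmoll]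
  have hmemF : ∀ z ∈ ball (0 : EuclideanSpace ℝ (Fin m)) ε, p - z ∈ closedBall p r := fun z hz => by
    rw [mem_ball_zero_iff] at hz
    simpa [dist_eq_norm] using (hz.trans hεr).le
  set S := sSup {c : ℝ | ∃ x ∈ ball x₀ (2*r), ∃ y ∈ ball x₀ (2*r),
    0 < dist x y ∧ dist x y < 2*ε ∧ c = dK n (f x) (f y) / dist x y ^ γ}
  refine (norm_pullA_le_of_vertDiff_le (K := S ^ 2 * ((2 * ε) ^ γ) ^ 2) hφc hφs hε0 hφ0
    ((hscale η).trans hη₄) hFloc p (fun z hz z' hz' => ?_)).trans_eq ?_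
  · rw [hF, indicator_of_mem (hmemF z hz), indicator_of_mem (hmemF z' hz')]
    refine abs_vertDiff_le_sSup hγ0 (fun x hx y hy => hf x (hball hx) y (hball hy))
      (hsub (hmemF z hz)) (hsub (hmemF z' hz')) ?_
    rw [mem_ball_zero_iff] at hz hz'
    rw [dist_sub_left, dist_eq_norm]
    linarith [norm_sub_le z z']
  · have hpow : ((2 * ε) ^ γ) ^ 2 * ε⁻¹ = 4 ^ γ * ε ^ (2*γ - 1) := by
      rw [Real.mul_rpow zero_le_two hε0.le, mul_pow, Real.rpow_sub_one hε0.ne',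
        mul_comm 2 γ, Real.rpow_mul hε0.le, Real.rpow_two, ← Real.rpow_mul_natCast zero_le_two,
        mul_comm γ, Real.rpow_mul zero_le_two]
      norm_num
      ring
    rw [hgrad]
    linear_combination (∫ z, ‖gradient η z‖) * S ^ 2 * hpow
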